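/- Let 0 < r ≤ p and let S be a random variable, b > 0, ε > 0. Then E[( |S| − ε b )_+^r] ≤ b^r · P{ |S| > ε b } + b^{r − p} ∫_{b^p}^∞ P{ |S| > s^{1/p} } ds. -/

import Mathlib

open MeasureTheory

/-- Pointwise comparison of the truncated `r`-th power with the truncated `p`-th power. -/
theorem rpow_max_sub_le {x c b r p : ℝ} (hx : c < x) (hc : 0 ≤ c) (hb : 0 < b) (hr : 0 ≤ r)
    (hrp : r ≤ p) :
    (max (x - c) 0) ^ r ≤ b ^ r + b ^ (r - p) * max (x ^ p - b ^ p) 0 := by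
  have hy : 0 < x - c := sub_pos.2 hx
  rw [max_eq_left hy.le]
  have hbp : 0 < b ^ (r - p) := Real.rpow_pos_of_pos hb _
  rcases le_total (x - c) b with h | h
  · have := Real.rpow_le_rpow hy.le h hr
    have : 0 ≤ b ^ (r - p) * max (x ^ p - b ^ p) 0 := by positivity
    linarith
  · have hsplit : (x - c) ^ r = (x - c) ^ (r - p) * (x - c) ^ p := by
      rw [← Real.rpow_add hy]; simp
    have hbr : b ^ r = b ^ (r - p) * b ^ p := by
      rw [← Real.rpow_add hb]; simp
    calc (x - c) ^ r = (x - c) ^ (r - p) * (x - c) ^ p := hsplit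
      _ ≤ b ^ (r - p) * x ^ p := by
          apply mul_le_mul _ _ (by positivity) hbp.le
          · exact Real.rpow_le_rpow_of_nonpos hb h (by linarith)
          · exact Real.rpow_le_rpow hy.le (by linarith) (by linarith)
      _ = b ^ r + b ^ (r - p) * (x ^ p - b ^ p) := by rw [hbr]; ring
      _ ≤ b ^ r + b ^ (r - p) * max (x ^ p - b ^ p) 0 := by
          gcongr
          exact le_max_left _ _

/-- Layer cake formula for the positive part of `f - c`. -/
theorem lintegral_ofReal_max_sub {Ω : Type*} [MeasurableSpace Ω] (μ : Measure Ω)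
    {f : Ω → ℝ} (hf : AEMeasurable f μ) (c : ℝ) :
    ∫⁻ ω, ENNReal.ofReal (max (f ω - c) 0) ∂μ = ∫⁻ s in Set.Ioi c, μ {ω | s < f ω} := by
  rw [lintegral_eq_lintegral_meas_lt μ (f := fun ω => max (f ω - c) 0)
    (Filter.Eventually.of_forall fun _ => le_max_right _ _)
    ((hf.sub_const c).max aemeasurable_const)]
  have h := (measurePreserving_add_right volume c).setLIntegral_comp_preimage_emb
    (measurableEmbedding_addRight c) (fun s => μ {ω | s < f ω}) (Set.Ioi c)
  rw [← h]
  simp only [Set.preimage_add_const_Ioi, sub_self]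
  refine setLIntegral_congr_fun measurableSet_Ioi fun t ht => ?_
  simp [not_lt.2 (le_of_lt (Set.mem_Ioi.1 ht)), lt_sub_iff_add_lt]

/-- **Key estimate in the Remark after Theorem 2.5.** For `0 < r ≤ p`, `b > 0`, `ε > 0`:
`E[(|S| − εb)₊^r] ≤ b^r P{|S| > εb} + b^{r−p} ∫_{b^p}^∞ P{|S| > s^{1/p}} ds`. -/
theorem stmt_15 {Ω : Type*} [MeasurableSpace Ω] (μ : Measure Ω) [IsProbabilityMeasure μ]
    (S : Ω → ℝ) (hS : Measurable S) (p r b ε : ℝ)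
    (hr0 : 0 < r) (hrp : r ≤ p) (hb : 0 < b) (hε : 0 < ε) :
    ∫⁻ ω, ENNReal.ofReal ((max (|S ω| - ε * b) 0) ^ r) ∂μ
      ≤ ENNReal.ofReal (b ^ r) * μ {ω | ε * b < |S ω|}
          + ENNReal.ofReal (b ^ (r - p)) *
              ∫⁻ s in Set.Ioi (b ^ p), μ {ω | s ^ (1 / p) < |S ω|} := by
  have hp : 0 < p := hr0.trans_le hrp
  have habs : Measurable fun ω => |S ω| := measurable_norm.comp hS
  have hA : MeasurableSet {ω | ε * b < |S ω|} := measurableSet_lt measurable_const habs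
  have htail : ∫⁻ s in Set.Ioi (b ^ p), μ {ω | s ^ (1 / p) < |S ω|}
      = ∫⁻ ω, ENNReal.ofReal (max (|S ω| ^ p - b ^ p) 0) ∂μ := by
    rw [lintegral_ofReal_max_sub μ (habs.pow_const p).aemeasurable]
    refine setLIntegral_congr_fun measurableSet_Ioi fun s hs => ?_
    have hs0 : 0 ≤ s := (Real.rpow_pos_of_pos hb p).le.trans (le_of_lt hs)
    simp only [one_div, Real.rpow_inv_lt_iff_of_pos hs0 (abs_nonneg _) hp]
  rw [htail, ← lintegral_indicator_const hA,
    ← lintegral_const_mul' _ _ ENNReal.ofReal_ne_top,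
    ← lintegral_add_left (measurable_const.indicator hA)]
  refine lintegral_mono fun ω => ?_
  by_cases h : ε * b < |S ω|
  · rw [Set.indicator_of_mem (by exact h), ← ENNReal.ofReal_mul (by positivity),
      ← ENNReal.ofReal_add (by positivity) (by positivity)]
    exact ENNReal.ofReal_le_ofReal (rpow_max_sub_le h (by positivity) hb hr0.le hrp)
  · simp [max_eq_right (sub_nonpos.2 (not_lt.1 h)), Real.zero_rpow hr0.ne']
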